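/- Let 0 < α < 1 and let λ > 0 be a real number. Then λ^α = (1/Γ(−α)) ∫_0^∞ (e^{−tλ} − 1) t^{−1−α} dt, where Γ is the Gamma function and the integral converges absolutely. -/

import Mathlib

open MeasureTheory Set

lemma abs_exp_neg_mul_sub_one_le {t l : ℝ} (ht : 0 ≤ t) (hl : 0 ≤ l) :
    |Real.exp (-t * l) - 1| ≤ t * l := by
  have hlower := Real.add_one_le_exp (-t * l)
  have hupper := Real.exp_le_one_iff.2 (by nlinarith : -t * l ≤ 0)
  rw [abs_le]
  constructor <;> nlinarith [mul_nonneg ht hl]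

open Filter Topology in
lemma tendsto_exp_neg_mul_sub_one_mul_rpow_nhdsGT_zero {α l : ℝ} (hα : α < 1) (hl : 0 < l) :
    Tendsto (fun t : ℝ => (Real.exp (-t * l) - 1) * t ^ (-α)) (𝓝[>] 0) (𝓝 0) := by
  have hlim : Tendsto (fun t : ℝ => l * t ^ (1 - α)) (𝓝[>] 0) (𝓝 0) := by
    have h : ContinuousAt (fun t : ℝ => l * t ^ (1 - α)) 0 :=
      continuousAt_const.mul (Real.continuousAt_rpow_const _ _ (Or.inr (by linarith)))
    have h' := h.tendsto
    rw [Real.zero_rpow (by linarith), mul_zero] at h'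
    exact h'.mono_left nhdsWithin_le_nhds
  refine squeeze_zero_norm' ?_ hlim
  filter_upwards [self_mem_nhdsWithin] with t (ht : 0 < t)
  rw [norm_mul, Real.norm_eq_abs, Real.norm_of_nonneg (Real.rpow_nonneg ht.le _), sub_eq_add_neg 1,
    Real.rpow_add ht, Real.rpow_one]
  calc _ ≤ t * l * t ^ (-α) := by gcongr; exact abs_exp_neg_mul_sub_one_le ht.le hl.le
    _ = _ := by ring

open Filter Topology in
lemma tendsto_exp_neg_mul_sub_one_mul_rpow_atTop {α l : ℝ} (hα : 0 < α) (hl : 0 < l) :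
    Tendsto (fun t : ℝ => (Real.exp (-t * l) - 1) * t ^ (-α)) atTop (𝓝 0) := by
  have hexp : Tendsto (fun t : ℝ => Real.exp (-t * l)) atTop (𝓝 0) :=
    Real.tendsto_exp_atBot.comp (tendsto_neg_atTop_atBot.atBot_mul_const hl)
  simpa using (hexp.sub_const 1).mul (tendsto_rpow_neg_atTop hα)

lemma integrableOn_exp_neg_mul_sub_one_mul_rpow {α l : ℝ} (hα0 : 0 < α) (hα1 : α < 1)
    (hl : 0 < l) :
    IntegrableOn (fun t : ℝ => (Real.exp (-t * l) - 1) * t ^ (-1 - α)) (Ioi 0) := by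
  have hmeas : Measurable fun t : ℝ => (Real.exp (-t * l) - 1) * t ^ (-1 - α) := by fun_prop
  rw [← Ioc_union_Ioi_eq_Ioi zero_le_one]
  refine IntegrableOn.union ?_ ?_
  · have hdom : IntegrableOn (fun t : ℝ => l * t ^ (-α)) (Ioc 0 1) :=
      ((intervalIntegrable_iff_integrableOn_Ioc_of_le zero_le_one).1
        (intervalIntegral.intervalIntegrable_rpow' (by linarith))).const_mul l
    refine hdom.mono' hmeas.aestronglyMeasurable ?_
    refine (ae_restrict_iff' measurableSet_Ioc).2 (ae_of_all _ fun t ht => ?_)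
    have ht0 : 0 < t := ht.1
    rw [norm_mul, Real.norm_eq_abs, Real.norm_of_nonneg (Real.rpow_nonneg ht0.le _)]
    calc _ ≤ t * l * t ^ (-1 - α) := by gcongr; exact abs_exp_neg_mul_sub_one_le ht0.le hl.le
      _ = l * (t ^ (1 : ℝ) * t ^ (-1 - α)) := by rw [Real.rpow_one]; ring
      _ = _ := by rw [← Real.rpow_add ht0]; ring_nf
  · refine (integrableOn_Ioi_rpow_of_lt (by linarith : -1 - α < -1) one_pos).mono'
      hmeas.aestronglyMeasurable ?_
    refine (ae_restrict_iff' measurableSet_Ioi).2 (ae_of_all _ fun t ht => ?_)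
    have ht0 : 0 < t := one_pos.trans ht
    have hexp : |Real.exp (-t * l) - 1| ≤ 1 := by
      have := Real.exp_pos (-t * l)
      have := Real.exp_le_one_iff.2 (by nlinarith : -t * l ≤ 0)
      rw [abs_le]
      constructor <;> linarith
    rw [norm_mul, Real.norm_eq_abs, Real.norm_of_nonneg (Real.rpow_nonneg ht0.le _)]
    exact mul_le_of_le_one_left (Real.rpow_nonneg ht0.le _) hexp

lemma integral_exp_neg_mul_sub_one_mul_rpow {α l : ℝ} (hα0 : 0 < α) (hα1 : α < 1) (hl : 0 < l) :
    ∫ t in Ioi (0 : ℝ), (Real.exp (-t * l) - 1) * t ^ (-1 - α) = l ^ α * Real.Gamma (-α) := by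
  have hu : ∀ t ∈ Ioi (0 : ℝ),
      HasDerivAt (fun t : ℝ => Real.exp (-t * l) - 1) (-l * Real.exp (-t * l)) t := fun t _ => by
    have h := ((((hasDerivAt_id t).neg).mul_const l).exp).sub_const 1
    exact h.congr_deriv (by simp [mul_comm])
  have hv : ∀ t ∈ Ioi (0 : ℝ),
      HasDerivAt (fun t : ℝ => -α⁻¹ * t ^ (-α)) (t ^ (-1 - α)) t := fun t ht => by
    have h := (Real.hasDerivAt_rpow_const (p := -α) (Or.inl (ne_of_gt ht))).const_mul (-α⁻¹)
    refine h.congr_deriv ?_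
    rw [show -α - 1 = -1 - α by ring]
    field_simp
  have hint : IntegrableOn (fun t : ℝ => t ^ (1 - α - 1) * Real.exp (-(l * t))) (Ioi 0) := by
    simpa using integrableOn_rpow_mul_exp_neg_mul_rpow
      (by linarith : -1 < 1 - α - 1) one_pos hl
  have hcongr : ∀ t : ℝ, -l * Real.exp (-t * l) * (-α⁻¹ * t ^ (-α)) =
      l * α⁻¹ * (t ^ (1 - α - 1) * Real.exp (-(l * t))) := fun t => by
    rw [show 1 - α - 1 = -α by ring, show -(l * t) = -t * l by ring]
    ring
  have hbdry : ((fun t : ℝ => Real.exp (-t * l) - 1) * fun t : ℝ => -α⁻¹ * t ^ (-α)) =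
      fun t : ℝ => -α⁻¹ * ((Real.exp (-t * l) - 1) * t ^ (-α)) := by
    ext t
    simp only [Pi.mul_apply]
    ring
  have hparts := integral_Ioi_mul_deriv_eq_deriv_mul (a' := 0) (b' := 0) hu hv
    (integrableOn_exp_neg_mul_sub_one_mul_rpow hα0 hα1 hl)
    (IntegrableOn.congr_fun (hint.const_mul (l * α⁻¹)) (fun t _ => (hcongr t).symm)
      measurableSet_Ioi)
    (by
      rw [hbdry]
      simpa using
        (tendsto_exp_neg_mul_sub_one_mul_rpow_nhdsGT_zero hα1 hl).const_mul (-α⁻¹))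
    (by
      rw [hbdry]
      simpa using (tendsto_exp_neg_mul_sub_one_mul_rpow_atTop hα0 hl).const_mul (-α⁻¹))
  simp only [hcongr] at hparts
  have hGamma : Real.Gamma (1 - α) = -α * Real.Gamma (-α) := by
    rw [← Real.Gamma_add_one (by linarith), neg_add_eq_sub]
  have hpow : l * (1 / l) ^ (1 - α) = l ^ α := by
    rw [one_div, Real.inv_rpow hl.le, ← Real.rpow_neg hl.le]
    nth_rewrite 1 [← Real.rpow_one l]
    rw [← Real.rpow_add hl]
    ring_nf
  rw [hparts, integral_const_mul, Real.integral_rpow_mul_exp_neg_mul_Ioi (by linarith) hl, hGamma,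
    ← hpow]
  field_simp
  ring

/-- for `0 < α < 1` and `λ > 0`,
`λ^α = (1/Γ(-α)) ∫_0^∞ (e^{-tλ} - 1) t^{-1-α} dt`, the integral converging absolutely. -/
theorem gamma_formula_real_power
    (α l : ℝ) (hα0 : 0 < α) (hα1 : α < 1) (hl : 0 < l) :
    IntegrableOn (fun t : ℝ => (Real.exp (-t * l) - 1) * t ^ (-1 - α)) (Ioi 0) ∧
    l ^ α = (1 / Real.Gamma (-α)) *
      ∫ t in Ioi (0 : ℝ), (Real.exp (-t * l) - 1) * t ^ (-1 - α) := by
  refine ⟨integrableOn_exp_neg_mul_sub_one_mul_rpow hα0 hα1 hl, ?_⟩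
  have hGamma : Real.Gamma (-α) ≠ 0 := Real.Gamma_ne_zero fun m hm => by
    have hα : α = m := neg_injective hm
    rw [hα] at hα0 hα1
    norm_cast at hα0 hα1
    omega
  rw [integral_exp_neg_mul_sub_one_mul_rpow hα0 hα1 hl]
  field_simp
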